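/- arXiv:1002.1122 — 3 statements merged into one kernel-verified Lean document; each statement's English description precedes it below -/
import Mathlib

section
/- Let G = (G, δ, ε) be a comonad on a category C and G' = (G', δ', ε') a comonad on a category D, and let (K, κ) be a comonad morphism from (C, G) to (D, G'). Then (K, κ) admits a left adjoint in the bicategory of comonads — that is, there exist a comonad morphism (L, λ) from (D, G') to (C, G) and an adjunction L ⊣ K with unit η : 𝟭_D ⟶ L ⋙ K and counit ε̄ : K ⋙ L ⟶ 𝟭_C such that κ_{L b} ∘ K(λ_b) ∘ η_{G' b} = G'(η_b) for every object b of D and G(ε̄_a) ∘ λ_{K a} ∘ L(κ_a) = ε̄_{G a} for every object a of C — if and only if the functor K has a left adjoint and κ is a natural isomorphism. -/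
/-!
Given an adjunction `L ⊣ K` with unit `η` and counit `e`, the mates correspondence matches
transformations `L(G' b) ⟶ G(L b)` with transformations `G'(K a) ⟶ K(G a)`. Since `κ` goes in the
opposite direction to the latter, the two conditions making `η` and `e` into 2-cells of comonads
say exactly that the mate of `lam` is a two-sided inverse of `κ`: this is used in
`isIso_of_unit_counit` for one direction.

Conversely, if `κ` is invertible, `lam` is taken to be the mate of `κ⁻¹`, which is characterised by
`η ≫ K(lam) = G'(η) ≫ κ⁻¹` (`exists_mate`). Transposing along the adjunction reduces each required
identity to the corresponding comonad morphism axiom, with `κ` moved to the other side.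
-/

open CategoryTheory

/-- If `κ` and `lam` are compatible with the unit and counit of `L ⊣ K`, then the mate of `lam` is
inverse to `κ`. -/
theorem isIso_of_unit_counit {C : Type*} [Category C] {D : Type*} [Category D]
    {G : C ⥤ C} {G' : D ⥤ D} {K : C ⥤ D} {L : D ⥤ C}
    (κ : G ⋙ K ⟶ K ⋙ G') (lam : G' ⋙ L ⟶ L ⋙ G) (adj : L ⊣ K)
    (hu : ∀ b : D, adj.unit.app (G'.obj b) ≫ K.map (lam.app b) ≫ κ.app (L.obj b) =
      G'.map (adj.unit.app b))
    (hc : ∀ a : C, L.map (κ.app a) ≫ lam.app (K.obj a) ≫ G.map (adj.counit.app a) =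
      adj.counit.app (G.obj a)) : IsIso κ := by
  have hiso (a : C) : IsIso (κ.app a) := by
    refine ⟨adj.unit.app (G'.obj (K.obj a)) ≫ K.map (lam.app (K.obj a)) ≫
      K.map (G.map (adj.counit.app a)), ?_, ?_⟩
    · have hη : κ.app a ≫ adj.unit.app (G'.obj (K.obj a)) =
          adj.unit.app (K.obj (G.obj a)) ≫ K.map (L.map (κ.app a)) := adj.unit.naturality (κ.app a)
      have hK := congrArg K.map (hc a)
      simp only [Functor.map_comp] at hK
      rw [reassoc_of% hη]
      erw [hK]
      exact adj.right_triangle_components (G.obj a)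
    · have hκ : K.map (G.map (adj.counit.app a)) ≫ κ.app a =
          κ.app (L.obj (K.obj a)) ≫ G'.map (K.map (adj.counit.app a)) :=
        κ.naturality (adj.counit.app a)
      have hu' := hu (K.obj a) =≫ G'.map (K.map (adj.counit.app a))
      simp only [Category.assoc] at hu' ⊢
      erw [hκ, hu']
      rw [← G'.map_comp, adj.right_triangle_components]
      exact G'.map_id _
  exact NatIso.isIso_of_isIso_app κ

/-- The mate `lam` of a transformation `σ : G'(K a) ⟶ K(G a)`, together with the equation
characterising it as the transpose of `G'(η) ≫ σ`. -/
theorem exists_mate {C : Type*} [Category C] {D : Type*} [Category D]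
    {G : C ⥤ C} {G' : D ⥤ D} {K : C ⥤ D} {L : D ⥤ C}
    (σ : K ⋙ G' ⟶ G ⋙ K) (adj : L ⊣ K) :
    ∃ lam : G' ⋙ L ⟶ L ⋙ G, ∀ b : D, adj.unit.app (G'.obj b) ≫ K.map (lam.app b) =
      G'.map (adj.unit.app b) ≫ σ.app (L.obj b) :=
  ⟨((mateEquiv adj adj).symm (.mk _ _ _ _ σ)).natTrans,
    fun b => (unit_mateEquiv_symm adj adj (.mk _ _ _ _ σ) b).symm⟩

/-- **Doctrinal adjunction for comonad morphisms (Proposition 2.1, in `Cat`).**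
A comonad morphism `(K, κ) : (C, G) → (D, G')` admits a left adjoint in the bicategory
of comonads if and only if `K` has a left adjoint and `κ` is a natural isomorphism. -/
theorem comonad_morphism_left_adjoint_iff
    {C : Type*} [Category C] {D : Type*} [Category D]
    (G : Comonad C) (G' : Comonad D) (K : C ⥤ D)
    (κ : G.toFunctor ⋙ K ⟶ K ⋙ G'.toFunctor)
    (hκδ : ∀ a : C, κ.app a ≫ G'.δ.app (K.obj a) =
      K.map (G.δ.app a) ≫ κ.app (G.obj a) ≫ G'.map (κ.app a))
    (hκε : ∀ a : C, κ.app a ≫ G'.ε.app (K.obj a) = K.map (G.ε.app a)) :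
    (∃ (L : D ⥤ C) (lam : G'.toFunctor ⋙ L ⟶ L ⋙ G.toFunctor),
      (∀ b : D, lam.app b ≫ G.δ.app (L.obj b) =
        L.map (G'.δ.app b) ≫ lam.app (G'.obj b) ≫ G.map (lam.app b)) ∧
      (∀ b : D, lam.app b ≫ G.ε.app (L.obj b) = L.map (G'.ε.app b)) ∧
      ∃ adj : L ⊣ K,
        (∀ b : D, adj.unit.app (G'.obj b) ≫ K.map (lam.app b) ≫ κ.app (L.obj b) =
          G'.map (adj.unit.app b)) ∧
        (∀ a : C, L.map (κ.app a) ≫ lam.app (K.obj a) ≫ G.map (adj.counit.app a) =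
          adj.counit.app (G.obj a))) ↔
    (K.IsRightAdjoint ∧ IsIso κ) := by
  constructor
  · rintro ⟨L, lam, -, -, adj, hu, hc⟩
    exact ⟨adj.isRightAdjoint, isIso_of_unit_counit κ lam adj hu hc⟩
  · rintro ⟨hK, hκ⟩
    obtain ⟨L, ⟨adj⟩⟩ := hK.exists_leftAdjoint
    obtain ⟨lam, hlam⟩ := exists_mate (inv κ) adj
    -- Components of `κ⁻¹`, with source and target in evaluated form.
    obtain ⟨σ, hσ⟩ : ∃ σ : ∀ a : C, G'.obj (K.obj a) ⟶ K.obj (G.obj a),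
        σ = fun a => (inv κ).app a := ⟨_, rfl⟩
    have hκσ (a : C) : κ.app a ≫ σ a = 𝟙 (K.obj (G.obj a)) := by
      subst hσ; exact NatTrans.congr_app (IsIso.hom_inv_id κ) a
    have hσκ (a : C) : σ a ≫ κ.app a = 𝟙 (G'.obj (K.obj a)) := by
      subst hσ; exact NatTrans.congr_app (IsIso.inv_hom_id κ) a
    have hσn {a a' : C} (f : a ⟶ a') :
        G'.map (K.map f) ≫ σ a' = σ a ≫ K.map (G.map f) := by
      subst hσ; exact (inv κ).naturality f
    replace hlam (b : D) : adj.unit.app (G'.obj b) ≫ K.map (lam.app b) =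
        G'.map (adj.unit.app b) ≫ σ (L.obj b) := by
      subst hσ; exact hlam b
    clear hσ
    have hη {b b' : D} (f : b ⟶ b') :
        f ≫ adj.unit.app b' = adj.unit.app b ≫ K.map (L.map f) := adj.unit.naturality f
    have hext {b : D} {a : C} {f g : L.obj b ⟶ a}
        (h : adj.unit.app b ≫ K.map f = adj.unit.app b ≫ K.map g) : f = g :=
      (adj.homEquiv b a).injective (by simpa only [adj.homEquiv_unit] using h)
    -- The comonad morphism axioms for `κ`, rewritten in terms of `κ⁻¹`.
    have hσε (a : C) : σ a ≫ K.map (G.ε.app a) = G'.ε.app (K.obj a) := by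
      rw [← hκε]
      exact (reassoc_of% hσκ a) (G'.ε.app (K.obj a))
    have hσδ (a : C) : σ a ≫ K.map (G.δ.app a) =
        G'.δ.app (K.obj a) ≫ G'.map (σ a) ≫ σ (G.obj a) := by
      have h : K.map (G.δ.app a) = κ.app a ≫ G'.δ.app (K.obj a) ≫ G'.map (σ a) ≫ σ (G.obj a) := by
        have h1 := hκδ a =≫ (G'.map (σ a) ≫ σ (G.obj a))
        have h2 : G'.map (κ.app a) ≫ G'.map (σ a) = 𝟙 (G'.obj (K.obj (G.obj a))) := by
          rw [← G'.map_comp, hκσ]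
          exact G'.map_id _
        simp only [Category.assoc] at h1
        erw [h1, reassoc_of% h2, hκσ]
        exact (Category.comp_id _).symm
      rw [h]
      exact (reassoc_of% hσκ a) _
    have hε'n {b b' : D} (f : b ⟶ b') : G'.map f ≫ G'.ε.app b' = G'.ε.app b ≫ f :=
      G'.ε.naturality f
    have hδ'n {b b' : D} (f : b ⟶ b') :
        G'.map f ≫ G'.δ.app b' = G'.δ.app b ≫ G'.map (G'.map f) := G'.δ.naturality f
    -- From here on only the components of `lam` matter.
    obtain ⟨l, hl⟩ : ∃ l : ∀ b : D, L.obj (G'.obj b) ⟶ G.obj (L.obj b),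
        l = fun b => lam.app b := ⟨_, rfl⟩
    have hlb (b : D) : lam.app b = l b := by rw [hl]
    replace hlam (b : D) : adj.unit.app (G'.obj b) ≫ K.map (l b) =
        G'.map (adj.unit.app b) ≫ σ (L.obj b) := by
      subst hl; exact hlam b
    refine ⟨L, lam, fun b => ?_, fun b => ?_, adj, fun b => ?_, fun a => ?_⟩
    · rw [hlb, hlb]
      change l b ≫ G.δ.app (L.obj b) = L.map (G'.δ.app b) ≫ l (G'.obj b) ≫ G.map (l b)
      apply hext
      calc adj.unit.app (G'.obj b) ≫ K.map (l b ≫ G.δ.app (L.obj b))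
          = G'.map (adj.unit.app b) ≫ σ (L.obj b) ≫ K.map (G.δ.app (L.obj b)) := by
            rw [K.map_comp, reassoc_of% (hlam b)]
        _ = G'.δ.app b ≫ G'.map (G'.map (adj.unit.app b) ≫ σ (L.obj b)) ≫
              σ (G.obj (L.obj b)) := by
            rw [hσδ, reassoc_of% (hδ'n (adj.unit.app b)), G'.map_comp, Category.assoc]
        _ = G'.δ.app b ≫ G'.map (adj.unit.app (G'.obj b)) ≫ σ (L.obj (G'.obj b)) ≫
              K.map (G.map (l b)) := by
            rw [← hlam, G'.map_comp, Category.assoc, hσn]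
        _ = adj.unit.app (G'.obj b) ≫
              K.map (L.map (G'.δ.app b) ≫ l (G'.obj b) ≫ G.map (l b)) := by
            rw [K.map_comp, K.map_comp, ← reassoc_of% (hη (G'.δ.app b))]
            exact congrArg _ ((reassoc_of% (hlam (G'.obj b))) _).symm
    · rw [hlb]
      change l b ≫ G.ε.app (L.obj b) = L.map (G'.ε.app b)
      apply hext
      rw [K.map_comp, reassoc_of% (hlam b), hσε, ← hη]
      exact hε'n (adj.unit.app b)
    · rw [hlb]
      have h := hlam b =≫ κ.app (L.obj b)
      simp only [Category.assoc] at h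
      erw [h, hσκ]
      exact Category.comp_id _
    · rw [hlb]
      change L.map (κ.app a) ≫ l (K.obj a) ≫ G.map (adj.counit.app a) = adj.counit.app (G.obj a)
      apply hext
      have h : G'.map (adj.unit.app (K.obj a)) ≫ G'.map (K.map (adj.counit.app a)) =
          𝟙 (G'.obj (K.obj a)) := by
        rw [← G'.map_comp, adj.right_triangle_components]
        exact G'.map_id _
      calc adj.unit.app (K.obj (G.obj a)) ≫
            K.map (L.map (κ.app a) ≫ l (K.obj a) ≫ G.map (adj.counit.app a))
          = κ.app a ≫ adj.unit.app (G'.obj (K.obj a)) ≫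
              K.map (l (K.obj a)) ≫ K.map (G.map (adj.counit.app a)) := by
            rw [K.map_comp, K.map_comp]
            exact ((reassoc_of% (hη (κ.app a))) _).symm
        _ = κ.app a ≫ G'.map (adj.unit.app (K.obj a)) ≫
              G'.map (K.map (adj.counit.app a)) ≫ σ a := by
            rw [reassoc_of% (hlam (K.obj a)), ← hσn]
            rfl
        _ = 𝟙 (K.obj (G.obj a)) := by
            rw [reassoc_of% h]
            exact hκσ a
        _ = _ := (adj.right_triangle_components (G.obj a)).symm
end

section
/- Let G = (G, δ, ε) be a comonad on a category C and G' = (G', δ', ε') a comonad on a category D, and let (K, κ) be a comonad morphism from (C, G) to (D, G') such that κ is a natural isomorphism and K has a left adjoint. Then the lifted functor K̂ from the category of Eilenberg–Moore G-coalgebras to the category of Eilenberg–Moore G'-coalgebras, sending a coalgebra (a, γ : a → G a) to the coalgebra (K a, κ_a ∘ K(γ)) and a coalgebra morphism f to K f, has a left adjoint. -/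
/-!
Let `adj : F ⊣ K` be an adjunction with unit `η`. A morphism `f : F b ⟶ x` is determined by its
transpose `η_b ≫ K f`. For a `G'`-coalgebra `(b, β)`, invertibility of `κ` yields a unique
`φ : F b ⟶ G (F b)` whose transpose satisfies `η_b ≫ K φ ≫ κ = β ≫ G' η_b`
(`mateCoaction`, `unit_mateCoaction`): this says exactly that `η_b` is compatible with the
coaction `β` and the lifted coaction on `K (F b)`. Transposing, and cancelling the isomorphisms
`κ`, turns the coalgebra laws for `φ` into those for `β`, and turns the condition that `f : F b ⟶ a`
be a coalgebra morphism into the same condition for `η_b ≫ K f`. Hence the hom-set bijection of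
`F ⊣ K` restricts to coalgebra morphisms, and `(b, β) ↦ (F b, φ)` is the object part of the
left adjoint.
-/

open CategoryTheory

variable {C : Type*} [Category C] {D : Type*} [Category D]

/-- The lifting of a comonad morphism `(K, κ) : (C, G) → (D, G')` to the
Eilenberg–Moore categories of coalgebras: it sends a coalgebra `(a, γ)` to
`(K a, κ_a ∘ K γ)` and a coalgebra morphism `f` to `K f`. -/
def liftedCoalgebraFunctor (G : Comonad C) (G' : Comonad D) (K : C ⥤ D)
    (κ : G.toFunctor ⋙ K ⟶ K ⋙ G'.toFunctor)
    (hκδ : ∀ a : C, κ.app a ≫ G'.δ.app (K.obj a) =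
      K.map (G.δ.app a) ≫ κ.app (G.obj a) ≫ G'.map (κ.app a))
    (hκε : ∀ a : C, κ.app a ≫ G'.ε.app (K.obj a) = K.map (G.ε.app a)) :
    Comonad.Coalgebra G ⥤ Comonad.Coalgebra G' where
  obj X :=
    { A := K.obj X.A
      a := K.map X.a ≫ κ.app X.A
      counit := by
        rw [Category.assoc, hκε, ← K.map_comp, X.counit, K.map_id]
      coassoc := by
        have hnat : ∀ {x y : C} (f : x ⟶ y),
            K.map (G.map f) ≫ κ.app y = κ.app x ≫ G'.map (K.map f) := by
          intro x y f; simpa using κ.naturality f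
        rw [Category.assoc, hκδ, ← Category.assoc (K.map X.a), ← K.map_comp,
          X.coassoc, K.map_comp, Category.assoc, Category.assoc]
        congr 1
        rw [← Category.assoc, hnat X.a, Category.assoc, G'.map_comp] }
  map {X Y} f :=
    { f := K.map f.f
      h := by
        have hnat : K.map (G.map f.f) ≫ κ.app Y.A = κ.app X.A ≫ G'.map (K.map f.f) := by
          simpa using κ.naturality f.f
        dsimp
        rw [Category.assoc, ← hnat, ← Category.assoc, ← K.map_comp, f.h,
          K.map_comp, Category.assoc] }
  map_id X := by ext; exact K.map_id X.A
  map_comp f g := by ext; exact K.map_comp f.f g.f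

namespace LiftedCoalgebra

theorem adj_hom_ext {F : D ⥤ C} {K : C ⥤ D} (adj : F ⊣ K) {b : D} {x : C} {f g : F.obj b ⟶ x}
    (h : adj.unit.app b ≫ K.map f = adj.unit.app b ≫ K.map g) : f = g := by
  apply (adj.homEquiv b x).injective
  rw [adj.homEquiv_unit, adj.homEquiv_unit, h]

theorem kappa_natural {G : Comonad C} {G' : Comonad D} {K : C ⥤ D}
    (κ : G.toFunctor ⋙ K ⟶ K ⋙ G'.toFunctor) {x y : C} (f : x ⟶ y) :
    K.map (G.map f) ≫ κ.app y = κ.app x ≫ G'.map (K.map f) :=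
  κ.naturality f

/-- `κ.app x`, with source and target written as `K (G x)` and `G' (K x)`, is an isomorphism. -/
theorem isIso_kappa_app {G : Comonad C} {G' : Comonad D} {K : C ⥤ D}
    (κ : G.toFunctor ⋙ K ⟶ K ⋙ G'.toFunctor) [IsIso κ] (x : C) :
    @IsIso D _ (K.obj (G.obj x)) (G'.obj (K.obj x)) (κ.app x) :=
  inferInstanceAs (IsIso (κ.app x))

/-- The coaction on `F b` induced by a `G'`-coalgebra `(b, β)`: the transpose under `F ⊣ K` of
`β ≫ G' η_b ≫ κ⁻¹ : b ⟶ K (G (F b))`. -/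
noncomputable def mateCoaction {G : Comonad C} {G' : Comonad D} {K : C ⥤ D} {F : D ⥤ C}
    (adj : F ⊣ K) (κ : G.toFunctor ⋙ K ⟶ K ⋙ G'.toFunctor) [IsIso κ]
    (X : Comonad.Coalgebra G') : F.obj X.A ⟶ G.obj (F.obj X.A) :=
  (adj.homEquiv X.A (G.obj (F.obj X.A))).symm
    (X.a ≫ G'.map (adj.unit.app X.A) ≫ (inv κ).app (F.obj X.A))

/-- The defining property of `mateCoaction`: the unit is compatible with the coactions. -/
theorem unit_mateCoaction {G : Comonad C} {G' : Comonad D} {K : C ⥤ D} {F : D ⥤ C}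
    (adj : F ⊣ K) (κ : G.toFunctor ⋙ K ⟶ K ⋙ G'.toFunctor) [IsIso κ]
    (X : Comonad.Coalgebra G') :
    adj.unit.app X.A ≫ K.map (mateCoaction adj κ X) ≫ κ.app (F.obj X.A) =
      X.a ≫ G'.map (adj.unit.app X.A) := by
  have h : adj.unit.app X.A ≫ K.map (mateCoaction adj κ X) =
      X.a ≫ G'.map (adj.unit.app X.A) ≫ (inv κ).app (F.obj X.A) := by
    refine (adj.homEquiv_unit (f := mateCoaction adj κ X)).symm.trans ?_
    exact Equiv.apply_symm_apply _ _
  have hinv : (inv κ).app (F.obj X.A) ≫ κ.app (F.obj X.A) = 𝟙 _ := by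
    rw [← NatTrans.comp_app, IsIso.inv_hom_id, NatTrans.id_app]
  have h2 := congrArg (fun t => t ≫ κ.app (F.obj X.A)) h
  simp only [Category.assoc] at h2
  refine h2.trans ?_
  erw [hinv, Category.comp_id]

theorem unit_mateCoaction_assoc {G : Comonad C} {G' : Comonad D} {K : C ⥤ D} {F : D ⥤ C}
    (adj : F ⊣ K) (κ : G.toFunctor ⋙ K ⟶ K ⋙ G'.toFunctor) [IsIso κ]
    (X : Comonad.Coalgebra G') {Z : D} (h : G'.obj (K.obj (F.obj X.A)) ⟶ Z) :
    adj.unit.app X.A ≫ K.map (mateCoaction adj κ X) ≫ κ.app (F.obj X.A) ≫ h =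
      X.a ≫ G'.map (adj.unit.app X.A) ≫ h := by
  have e := congrArg (fun t => t ≫ h) (unit_mateCoaction adj κ X)
  simp only [Category.assoc] at e
  exact e

/-- The `G`-coalgebra `(F b, φ)` attached to a `G'`-coalgebra `(b, β)`: the value of the left
adjoint of the lifted functor. -/
noncomputable def leftObj {G : Comonad C} {G' : Comonad D} {K : C ⥤ D} {F : D ⥤ C}
    (adj : F ⊣ K) (κ : G.toFunctor ⋙ K ⟶ K ⋙ G'.toFunctor)
    (hκδ : ∀ a : C, κ.app a ≫ G'.δ.app (K.obj a) =
      K.map (G.δ.app a) ≫ κ.app (G.obj a) ≫ G'.map (κ.app a))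
    (hκε : ∀ a : C, κ.app a ≫ G'.ε.app (K.obj a) = K.map (G.ε.app a)) [IsIso κ]
    (X : Comonad.Coalgebra G') : Comonad.Coalgebra G where
  A := F.obj X.A
  a := mateCoaction adj κ X
  counit := by
    apply adj_hom_ext adj
    have hε : G'.map (adj.unit.app X.A) ≫ G'.ε.app (K.obj (F.obj X.A)) =
        G'.ε.app X.A ≫ adj.unit.app X.A := G'.ε.naturality (adj.unit.app X.A)
    rw [K.map_comp, ← hκε, K.map_id]
    refine (unit_mateCoaction_assoc adj κ X _).trans ?_
    rw [hε, X.counit_assoc]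
    exact (Category.comp_id _).symm
  coassoc := by
    apply adj_hom_ext adj
    have := isIso_kappa_app κ (F.obj X.A)
    have := isIso_kappa_app κ (G.obj (F.obj X.A))
    have hδ : G'.map (adj.unit.app X.A) ≫ G'.δ.app (K.obj (F.obj X.A)) =
        G'.δ.app X.A ≫ G'.map (G'.map (adj.unit.app X.A)) :=
      G'.δ.naturality (adj.unit.app X.A)
    -- It suffices to compare after the isomorphism `K G G ≅ G' G' K` induced by `κ`.
    rw [← cancel_mono (κ.app (G.obj (F.obj X.A))), ← cancel_mono (G'.map (κ.app (F.obj X.A)))]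
    simp only [K.map_comp, Category.assoc]
    trans X.a ≫ G'.map (X.a ≫ G'.map (adj.unit.app X.A))
    · rw [← hκδ]
      refine (unit_mateCoaction_assoc adj κ X _).trans ?_
      rw [hδ, X.coassoc_assoc, G'.map_comp]
    · rw [← Category.assoc (K.map (G.map _)), kappa_natural, Category.assoc]
      refine Eq.symm ((unit_mateCoaction_assoc adj κ X _).trans ?_)
      rw [← G'.map_comp, ← G'.map_comp]
      exact congrArg (fun t => X.a ≫ G'.map t) (unit_mateCoaction adj κ X)

/-- A morphism `F b ⟶ a` respects the coactions if and only if its transpose `b ⟶ K a` does. -/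
theorem hom_iff {G : Comonad C} {G' : Comonad D} {K : C ⥤ D} {F : D ⥤ C}
    (adj : F ⊣ K) (κ : G.toFunctor ⋙ K ⟶ K ⋙ G'.toFunctor) [IsIso κ]
    (X : Comonad.Coalgebra G') (Y : Comonad.Coalgebra G) (f : F.obj X.A ⟶ Y.A) :
    mateCoaction adj κ X ≫ G.map f = f ≫ Y.a ↔
      X.a ≫ G'.map (adj.homEquiv _ _ f) = adj.homEquiv _ _ f ≫ K.map Y.a ≫ κ.app Y.A := by
  have := isIso_kappa_app κ Y.A
  have h1 : (adj.unit.app X.A ≫ K.map (mateCoaction adj κ X ≫ G.map f)) ≫ κ.app Y.A =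
      X.a ≫ G'.map (adj.homEquiv _ _ f) := by
    simp only [K.map_comp, Category.assoc]
    rw [kappa_natural]
    refine (unit_mateCoaction_assoc adj κ X _).trans ?_
    rw [← G'.map_comp, adj.homEquiv_unit]
  have h2 : (adj.unit.app X.A ≫ K.map (f ≫ Y.a)) ≫ κ.app Y.A =
      adj.homEquiv _ _ f ≫ K.map Y.a ≫ κ.app Y.A := by
    simp only [K.map_comp, Category.assoc, adj.homEquiv_unit]
  rw [← h1, ← h2]
  constructor
  · intro h
    rw [h]
  · intro h
    exact adj_hom_ext adj ((cancel_mono (κ.app Y.A)).1 h)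

/-- The hom-set bijection of `F ⊣ K`, restricted to coalgebra morphisms. -/
noncomputable def liftedHomEquiv {G : Comonad C} {G' : Comonad D} {K : C ⥤ D} {F : D ⥤ C}
    (adj : F ⊣ K) (κ : G.toFunctor ⋙ K ⟶ K ⋙ G'.toFunctor)
    (hκδ : ∀ a : C, κ.app a ≫ G'.δ.app (K.obj a) =
      K.map (G.δ.app a) ≫ κ.app (G.obj a) ≫ G'.map (κ.app a))
    (hκε : ∀ a : C, κ.app a ≫ G'.ε.app (K.obj a) = K.map (G.ε.app a)) [IsIso κ]
    (X : Comonad.Coalgebra G') (Y : Comonad.Coalgebra G) :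
    (leftObj adj κ hκδ hκε X ⟶ Y) ≃ (X ⟶ (liftedCoalgebraFunctor G G' K κ hκδ hκε).obj Y) where
  toFun f :=
    { f := adj.homEquiv X.A Y.A f.f
      h := (hom_iff adj κ X Y f.f).1 f.h }
  invFun g :=
    { f := (adj.homEquiv X.A Y.A).symm g.f
      h := (hom_iff adj κ X Y _).2 (by
        have e : adj.homEquiv X.A Y.A ((adj.homEquiv X.A Y.A).symm g.f) = g.f :=
          Equiv.apply_symm_apply _ _
        exact (congrArg (fun t => X.a ≫ G'.map t) e).trans
          (g.h.trans (congrArg (fun t => t ≫ K.map Y.a ≫ κ.app Y.A) e).symm)) }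
  left_inv f := by
    ext
    exact (adj.homEquiv X.A Y.A).symm_apply_apply f.f
  right_inv g := by
    ext
    exact (adj.homEquiv X.A Y.A).apply_symm_apply g.f

end LiftedCoalgebra

/-- **Corollary 2.2 (in `Cat`).** If `(K, κ)` is a comonad morphism with `κ` invertible
and `K` admitting a left adjoint, then the lifted functor between the Eilenberg–Moore
categories of coalgebras admits a left adjoint. -/
theorem liftedCoalgebraFunctor_isRightAdjoint (G : Comonad C) (G' : Comonad D) (K : C ⥤ D)
    (κ : G.toFunctor ⋙ K ⟶ K ⋙ G'.toFunctor)
    (hκδ : ∀ a : C, κ.app a ≫ G'.δ.app (K.obj a) =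
      K.map (G.δ.app a) ≫ κ.app (G.obj a) ≫ G'.map (κ.app a))
    (hκε : ∀ a : C, κ.app a ≫ G'.ε.app (K.obj a) = K.map (G.ε.app a))
    (hκ : IsIso κ) (hK : K.IsRightAdjoint) :
    (liftedCoalgebraFunctor G G' K κ hκδ hκε).IsRightAdjoint := by
  obtain ⟨F, ⟨adj⟩⟩ := hK
  exact (Adjunction.adjunctionOfEquivLeft
    (F_obj := LiftedCoalgebra.leftObj adj κ hκδ hκε)
    (LiftedCoalgebra.liftedHomEquiv adj κ hκδ hκε) (fun X Y Y' g h => by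
      ext
      exact adj.homEquiv_naturality_right h.f g.f)).isRightAdjoint
end

section
/- Let C and D be monoidal categories and F : C ⥤ D a lax monoidal functor with structure morphisms φ_{x,y} : F x ⊗ F y → F(x ⊗ y) and φ₀ : 𝟙_D → F(𝟙_C). Then there exist a lax monoidal functor G : D ⥤ C and an adjunction F ⊣ G whose unit and counit are monoidal natural transformations if and only if F is strong monoidal (i.e. all φ_{x,y} and φ₀ are isomorphisms) and F has a right adjoint as a mere functor. -/
/-!
If the unit `η` and counit `c` of `F ⊣ G` are monoidal, the mates of the structure morphisms of `G`
invert those of `F`: the inverse of `ε F` is `F.map (ε G) ≫ c`, and the inverse of `μ F x y` is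
`F.map ((η ⊗ η) ≫ μ G _ _) ≫ c`. One composite is the identity because `c` is monoidal, the other
because `η` is, together with a triangle identity in each case but that of `ε F ≫ _`.

Conversely, the inverses of `ε F` and `μ F` make `F` oplax monoidal, and their mates form a lax
monoidal structure on any right adjoint (`Adjunction.rightAdjointLaxMonoidal`), for which the unit
and counit are monoidal.
-/

open CategoryTheory
open MonoidalCategory Functor.LaxMonoidal

section

variable {C : Type*} [Category C] [MonoidalCategory C]
  {D : Type*} [Category D] [MonoidalCategory D]
  {F : C ⥤ D} [F.LaxMonoidal] {G : D ⥤ C} [G.LaxMonoidal] (adj : F ⊣ G)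

theorem isIso_ε_of_isMonoidal (hu : NatTrans.IsMonoidal adj.unit)
    (hc : NatTrans.IsMonoidal adj.counit) : IsIso (ε F) := by
  have h1 : adj.unit.app (𝟙_ C) = ε G ≫ G.map (ε F) := by
    simpa using hu.unit
  have h2 : ε F ≫ F.map (ε G) ≫ adj.counit.app (𝟙_ D) = 𝟙 _ := by
    simpa using hc.unit
  refine ⟨F.map (ε G) ≫ adj.counit.app (𝟙_ D), h2, ?_⟩
  have h3 := adj.left_triangle_components (𝟙_ C)
  rw [h1, F.map_comp, Category.assoc, adj.counit_naturality] at h3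
  simpa using h3

theorem isIso_μ_of_isMonoidal (hu : NatTrans.IsMonoidal adj.unit)
    (hc : NatTrans.IsMonoidal adj.counit) (x y : C) : IsIso (μ F x y) := by
  have h1 : adj.unit.app (x ⊗ y) =
      (adj.unit.app x ⊗ₘ adj.unit.app y) ≫ μ G (F.obj x) (F.obj y) ≫ G.map (μ F x y) := by
    simpa using hu.tensor x y
  have h2 : μ F (G.obj (F.obj x)) (G.obj (F.obj y)) ≫ F.map (μ G (F.obj x) (F.obj y)) ≫
      adj.counit.app (F.obj x ⊗ F.obj y) =
      (adj.counit.app (F.obj x) ⊗ₘ adj.counit.app (F.obj y)) := by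
    simpa using hc.tensor (F.obj x) (F.obj y)
  refine ⟨F.map (adj.unit.app x ⊗ₘ adj.unit.app y) ≫ F.map (μ G (F.obj x) (F.obj y)) ≫
    adj.counit.app (F.obj x ⊗ F.obj y), ?_, ?_⟩
  · have h4 := μ_natural_assoc F (adj.unit.app x) (adj.unit.app y)
      (F.map (μ G (F.obj x) (F.obj y)) ≫ adj.counit.app (F.obj x ⊗ F.obj y))
    refine h4.symm.trans ?_
    refine (congrArg (_ ≫ ·) h2).trans ?_
    refine (tensorHom_comp_tensorHom _ _ _ _).trans ?_
    exact (congrArg₂ (· ⊗ₘ ·) (adj.left_triangle_components x)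
      (adj.left_triangle_components y)).trans (id_tensorHom_id _ _)
  · have h3 := adj.left_triangle_components (x ⊗ y)
    rw [h1, F.map_comp, F.map_comp, Category.assoc, Category.assoc, adj.counit_naturality] at h3
    simpa using h3

end

/-- **Doctrinal adjunction for monoidal functors (Proposition 3.1, in `Cat`).**
A lax monoidal functor `F : C ⥤ D` admits a right adjoint in the 2-category of
monoidal categories, lax monoidal functors and monoidal natural transformations
(i.e. there are a lax monoidal functor `G : D ⥤ C` and an adjunction `F ⊣ G` whose
unit and counit are monoidal natural transformations) if and only if `F` is strong
monoidal (its structure morphisms `φ = μ` and `φ₀ = ε` are isomorphisms)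
and `F` has a right adjoint as a mere functor. -/
theorem laxMonoidal_right_adjoint_iff
    {C : Type*} [Category C] [MonoidalCategory C]
    {D : Type*} [Category D] [MonoidalCategory D]
    (F : C ⥤ D) [F.LaxMonoidal] :
    (∃ (G : D ⥤ C) (hG : G.LaxMonoidal) (adj : F ⊣ G),
      letI := hG
      NatTrans.IsMonoidal adj.unit ∧ NatTrans.IsMonoidal adj.counit) ↔
    ((IsIso (Functor.LaxMonoidal.ε F) ∧ ∀ x y : C, IsIso (Functor.LaxMonoidal.μ F x y)) ∧
      F.IsLeftAdjoint) := by
  constructor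
  · rintro ⟨G, hG, adj, hu, hc⟩
    exact ⟨⟨isIso_ε_of_isMonoidal adj hu hc, isIso_μ_of_isMonoidal adj hu hc⟩, adj.isLeftAdjoint⟩
  · rintro ⟨⟨hε, hμ⟩, hF⟩
    let adj := Adjunction.ofIsLeftAdjoint F
    -- The lax structure underlying this monoidal structure is definitionally the given one.
    let hM : F.Monoidal := Functor.Monoidal.ofLaxMonoidal F
    let hG := adj.rightAdjointLaxMonoidal
    have hadj : adj.IsMonoidal := inferInstance
    exact ⟨_, hG, adj, Adjunction.IsMonoidal.instIsMonoidalUnit adj,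
      Adjunction.IsMonoidal.instIsMonoidalCounit adj⟩
end
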